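/- arXiv:2605.12341 — 2 statements merged into one kernel-verified Lean document; each statement's English description precedes it below -/
import Mathlib

section
/- Let μ be a probability measure on ℝ and let X_1, …, X_{n+1} be independent random variables each with law μ (formally, the coordinate maps on the product space (ℝ^{n+1}, μ^{⊗(n+1)})). For 1 ≤ k ≤ n, let X_{(k)} denote the k-th smallest value among X_1, …, X_n. Then the probability of the event {X_{n+1} ≤ X_{(k)}} is at least k/(n+1). -/
open MeasureTheory

/-- The `k`-th smallest value (0-indexed) among `t 0, …, t (n-1)`. -/
noncomputable def orderStat {n : ℕ} (t : Fin n → ℝ) (k : Fin n) : ℝ :=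
  (t ∘ Tuple.sort t) k

/-! The event `X_{n+1} ≤ X_{(k)}` says exactly that fewer than `k` of `X_1, …, X_{n+1}` lie strictly
below `X_{n+1}`. By exchangeability this has the same probability for every index in place of
`n + 1`, while at every outcome at least `k` of the `n + 1` indices have the property; so the
`n + 1` equal probabilities add up to at least `k`. -/

open Finset

section StrictRank

variable {ι α : Type*} [Fintype ι]

/-- The rank of the `i`-th entry of the family `x`, counted from `0`: the number of entries strictly
below it. Tied entries share the lowest of their ranks, so that `strictRank` is equivariant under
permutations of the indices. -/
def strictRank [LT α] [DecidableLT α] (x : ι → α) (i : ι) : ℕ :=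
  #{j | x j < x i}

theorem strictRank_comp_perm [LT α] [DecidableLT α] (x : ι → α) (σ : Equiv.Perm ι) (i : ι) :
    strictRank (x ∘ σ) i = strictRank x (σ i) :=
  card_equiv σ (by simp)

theorem le_card_strictRank_lt [Preorder α] [DecidableLT α] (x : ι → α) {k : ℕ}
    (hk : k ≤ Fintype.card ι) : k ≤ #{i | strictRank x i < k} := by
  by_cases h_all : ∀ i, strictRank x i < k
  · simpa only [h_all, filter_true, card_univ] using hk
  · obtain ⟨i₀, hi₀⟩ := not_forall.mp h_all
    -- Below a minimal entry of rank at least `k` there are `k` or more entries, all of rank `< k`.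
    obtain ⟨i, hi, hmin⟩ := exists_minimalFor x {i | ¬ strictRank x i < k}
      ⟨i₀, mem_filter_univ i₀ |>.mpr hi₀⟩
    have below_subset : ({j | x j < x i} : Finset ι) ⊆ ({j | strictRank x j < k} : Finset ι) := by
      simp only [subset_iff, mem_filter_univ]
      intro j hji
      by_contra hj
      exact hji.not_ge (hmin (mem_filter_univ j |>.mpr hj) hji.le)
    calc k ≤ strictRank x i := not_lt.mp (mem_filter_univ i |>.mp hi)
      _ ≤ #{j | strictRank x j < k} := card_le_card below_subset

theorem strictRank_last [Preorder α] [DecidableLT α] {n : ℕ} (x : Fin (n + 1) → α) :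
    strictRank x (Fin.last n) = #{i : Fin n | x i.castSucc < x (Fin.last n)} := by
  simp only [strictRank, card_filter, Fin.sum_univ_castSucc, lt_irrefl, if_false, add_zero]

theorem measurable_strictRank [LinearOrder α] [TopologicalSpace α] [OrderClosedTopology α]
    [SecondCountableTopology α] [MeasurableSpace α] [OpensMeasurableSpace α] (i : ι) :
    Measurable fun x : ι → α ↦ strictRank x i := by
  simp only [strictRank, card_filter]
  exact measurable_sum _ fun j _ ↦ Measurable.ite
    (measurableSet_lt (measurable_pi_apply j) (measurable_pi_apply i))
    measurable_const measurable_const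

end StrictRank

theorem le_orderStat_iff {n : ℕ} (t : Fin n → ℝ) (k : Fin n) (a : ℝ) :
    a ≤ orderStat t k ↔ #{i | t i < a} ≤ (k : ℕ) := by
  have card_sorted : #{i | (t ∘ Tuple.sort t) i < a} = #{i | t i < a} :=
    card_equiv (Tuple.sort t) (by simp)
  rw [← not_lt, ← not_lt, ← card_sorted]
  exact (Tuple.lt_card_lt_iff_apply_lt_of_monotone (Tuple.monotone_sort t)).not.symm

theorem last_le_orderStat_iff {n : ℕ} (x : Fin (n + 1) → ℝ) (k : Fin n) :
    x (Fin.last n) ≤ orderStat (fun i : Fin n ↦ x i.castSucc) k ↔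
      strictRank x (Fin.last n) ≤ k := by
  rw [le_orderStat_iff, strictRank_last]

theorem natCast_mul_measure_univ_le_sum {Ω ι : Type*} [MeasurableSpace Ω] [Fintype ι]
    (P : Measure Ω) {s : ι → Set Ω} (hs : ∀ i, MeasurableSet (s i)) {k : ℕ}
    [∀ ω, DecidablePred fun i ↦ ω ∈ s i] (hk : ∀ ω, k ≤ #{i | ω ∈ s i}) :
    k * P Set.univ ≤ ∑ i, P (s i) := by
  calc (k : ENNReal) * P Set.univ = ∫⁻ _, k ∂P := (lintegral_const _).symm
    _ ≤ ∫⁻ ω, ∑ i, (s i).indicator 1 ω ∂P := by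
      refine lintegral_mono fun ω ↦ ?_
      simpa [Set.indicator_apply] using hk ω
    _ = ∑ i, ∫⁻ ω, (s i).indicator 1 ω ∂P :=
      lintegral_finsetSum _ fun i _ ↦ measurable_one.indicator (hs i)
    _ = ∑ i, P (s i) := sum_congr rfl fun i _ ↦ lintegral_indicator_one (hs i)

/-- Exchangeability of the coordinates under `P`: the joint law is invariant under all permutations
of the index type. It is this symmetry that makes every index equally likely to have small rank. -/
def IsExchangeable {ι α : Type*} [MeasurableSpace α] (P : Measure (ι → α)) : Prop :=
  ∀ σ : Equiv.Perm ι, MeasurePreserving (fun x : ι → α ↦ x ∘ σ) P P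

theorem isExchangeable_pi {ι α : Type*} [Fintype ι] [MeasurableSpace α] (μ : Measure α)
    [SigmaFinite μ] : IsExchangeable (Measure.pi fun _ : ι ↦ μ) := fun σ ↦
  measurePreserving_arrowCongr' (fun _ ↦ μ) (fun _ ↦ μ) σ.symm (.refl α) fun _ ↦ .id μ

namespace IsExchangeable

variable {ι α : Type*} [Fintype ι] [LinearOrder α] [TopologicalSpace α] [OrderClosedTopology α]
  [SecondCountableTopology α] [MeasurableSpace α] [OpensMeasurableSpace α]
  {P : Measure (ι → α)}

theorem measure_strictRank_lt_eq (hP : IsExchangeable P) (k : ℕ) (i j : ι) :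
    P {x | strictRank x i < k} = P {x | strictRank x j < k} := by
  classical
  have hmeas : MeasurableSet {x : ι → α | strictRank x j < k} :=
    measurableSet_lt (measurable_strictRank j) measurable_const
  rw [← (hP (Equiv.swap i j)).measure_preimage hmeas.nullMeasurableSet]
  simp only [Set.preimage_ofPred_eq, strictRank_comp_perm, Equiv.swap_apply_right]

theorem natCast_mul_measure_univ_le (hP : IsExchangeable P) {k : ℕ} (hk : k ≤ Fintype.card ι)
    (i : ι) : k * P Set.univ ≤ Fintype.card ι * P {x | strictRank x i < k} := by
  calc k * P Set.univ ≤ ∑ j, P {x | strictRank x j < k} :=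
      natCast_mul_measure_univ_le_sum P
        (fun j ↦ measurableSet_lt (measurable_strictRank j) measurable_const)
        fun x ↦ le_card_strictRank_lt x hk
    _ = ∑ _j : ι, P {x | strictRank x i < k} :=
      sum_congr rfl fun j _ ↦ hP.measure_strictRank_lt_eq k j i
    _ = Fintype.card ι * P {x | strictRank x i < k} := by
      rw [sum_const, card_univ, nsmul_eq_mul]

end IsExchangeable

theorem stmt3_general {n : ℕ} {P : Measure (Fin (n + 1) → ℝ)} [IsProbabilityMeasure P]
    (hP : IsExchangeable P) {k : ℕ} (hk1 : 1 ≤ k) (hkn : k ≤ n) :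
    ENNReal.ofReal ((k : ℝ) / (n + 1)) ≤
      P {ω | ω (Fin.last n) ≤
        orderStat (fun i : Fin n ↦ ω i.castSucc) ⟨k - 1, Nat.sub_one_lt_of_le hk1 hkn⟩} := by
  simp only [last_le_orderStat_iff, Nat.le_sub_one_iff_lt hk1]
  have rank_bound := hP.natCast_mul_measure_univ_le (hkn.trans (by simp)) (Fin.last n)
  rw [measure_univ, mul_one, Fintype.card_fin] at rank_bound
  rw [← Nat.cast_succ, ENNReal.ofReal_div_of_pos (by positivity), ENNReal.ofReal_natCast,
    ENNReal.ofReal_natCast]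
  exact ENNReal.div_le_of_le_mul' rank_bound

/-- split conformal coverage: for i.i.d. `X_1, …, X_{n+1}` with law `μ`
(coordinates of the product measure), the probability that `X_{n+1}` does not exceed the
`k`-th smallest of `X_1, …, X_n` is at least `k/(n+1)`. -/
theorem stmt3 (n : ℕ) (hn : 0 < n) (μ : Measure ℝ) [IsProbabilityMeasure μ]
    (k : ℕ) (hk1 : 1 ≤ k) (hkn : k ≤ n) :
    ENNReal.ofReal ((k : ℝ) / (n + 1)) ≤
      Measure.pi (fun _ : Fin (n + 1) => μ)
        {ω | ω (Fin.last n) ≤ orderStat (fun i : Fin n => ω i.castSucc) ⟨k - 1, by omega⟩} :=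
  stmt3_general (isExchangeable_pi μ) hk1 hkn
end

section
/- Let n, d, ρ be positive integers and let v^{(1)}, …, v^{(n)} ∈ ℝ^d be vectors such that for each coordinate j ∈ {1,…,d} the values |v_j^{(1)}|, …, |v_j^{(n)}| are pairwise distinct. Let M_0 ⊆ M_1 ⊆ … ⊆ M_ρ ⊆ {1,…,n} be any increasing family of index sets with M_0 = ∅ such that, for every stage k < ρ and every coordinate j, the index attaining max_{m ∉ M_k} |v_j^{(m)}| belongs to M_{k+1} (assume all complements encountered are nonempty). Then for every coordinate j, the set of indices of the ρ largest values among |v_j^{(1)}|, …, |v_j^{(n)}| is contained in M_ρ. Consequently, for every j, max_{m ∉ M_ρ} |v_j^{(m)}| is at most the (ρ+1)-th largest value among |v_j^{(1)}|, …, |v_j^{(n)}|, and the axis-aligned box centered at any point with half-widths q*_j = max_{m ∉ M_ρ} |v_j^{(m)}| is contained in the box with half-widths q̃_j equal to those (ρ+1)-th largest values. -/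
/-- The `k`-th smallest value (0-indexed) among `t 0, …, t (n-1)`; junk value `0` when
`k ≥ n`. -/
noncomputable def orderStatN {n : ℕ} (t : Fin n → ℝ) (k : ℕ) : ℝ :=
  if h : k < n then (t ∘ Tuple.sort t) ⟨k, h⟩ else 0

/-!
Fix a coordinate. By induction on `k`, after `k` stages every index with fewer than `k` values
above it has been removed: a retained index that stage `k + 1` does not remove lies strictly below
some other retained index, and that one has fewer values above it, so that it would have been
removed already. On the other hand, at most `ρ` of the `n` values exceed the one of rank
`n - ρ - 1` counted from `0` in increasing order; an index whose own value exceeds it is one of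
these `ρ`, hence has fewer than `ρ` values above it.
-/

section

open Finset

theorem card_filter_lt_lt_card_filter_lt {α β : Type*} [Fintype α] [Preorder β] [DecidableLT β]
    {t : α → β} {x : β} {m : α} (hx : x < t m) :
    #{i | t m < t i} < #{i | x < t i} := by
  refine card_lt_card ((ssubset_iff_of_subset ?_).2 ⟨m, by simpa using hx, by simp⟩)
  exact monotone_filter_right _ fun i _ hi => hx.trans hi

theorem mem_of_card_filter_lt_lt_of_maximal_mem_succ {α β : Type*} [Fintype α] [LinearOrder β]
    {t : α → β} {M : ℕ → Finset α} {ρ : ℕ} (hmono : ∀ k < ρ, M k ⊆ M (k + 1))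
    (hstep : ∀ k < ρ, ∀ m ∉ M k, (∀ m' ∉ M k, t m' ≤ t m) → m ∈ M (k + 1)) {m : α}
    (hm : #{i | t m < t i} < ρ) : m ∈ M ρ := by
  induction ρ generalizing m with
  | zero => exact absurd hm (Nat.not_lt_zero _)
  | succ k ih =>
    have removed_before : ∀ {i}, #{i' | t i < t i'} < k → i ∈ M k :=
      ih (fun l hl => hmono l (hl.trans k.lt_succ_self))
        (fun l hl => hstep l (hl.trans k.lt_succ_self))
    by_cases hmk : m ∈ M k
    · exact hmono k k.lt_succ_self hmk
    · refine hstep k k.lt_succ_self m hmk fun m' hm' => le_of_not_gt fun hlt => hm' ?_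
      exact removed_before
        ((card_filter_lt_lt_card_filter_lt hlt).trans_le (Nat.lt_succ_iff.1 hm))

theorem card_filter_orderStatN_lt_add_lt {n k : ℕ} (t : Fin n → ℝ) (hk : k < n) :
    #{i | orderStatN t k < t i} + k < n := by
  have position_gt : ∀ i, orderStatN t k < t i → ⟨k, hk⟩ < (Tuple.sort t).symm i := by
    intro i hi
    rw [orderStatN, dif_pos hk] at hi
    exact (Tuple.monotone_sort t).reflect_lt (by simpa using hi)
  have card_le : #{i | orderStatN t k < t i} ≤ #(Ioi (⟨k, hk⟩ : Fin n)) :=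
    card_le_card_of_injOn (Tuple.sort t).symm
      (fun i hi => mem_coe.2 (mem_Ioi.2 (position_gt i (mem_filter.1 hi).2)))
      (Tuple.sort t).symm.injective.injOn
  rw [Fin.card_Ioi] at card_le
  lia

theorem le_orderStatN_of_le_card_filter_lt {n ρ : ℕ} {t : Fin n → ℝ} {m : Fin n}
    (hm : ρ ≤ #{i | t m < t i}) : t m ≤ orderStatN t (n - ρ - 1) := by
  by_contra! hlt
  have card_lt := card_filter_lt_lt_card_filter_lt hlt
  have rank_lt : n - ρ - 1 < n := by have := m.pos; lia
  have card_add_lt := card_filter_orderStatN_lt_add_lt t rank_lt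
  lia

theorem stmt12_general {n ρ : ℕ} {ι : Type*} (v : Fin n → ι → ℝ) (M : ℕ → Finset (Fin n))
    (hmono : ∀ k < ρ, M k ⊆ M (k + 1)) (hcompl : ((M ρ)ᶜ : Finset (Fin n)).Nonempty)
    (hstep : ∀ k < ρ, ∀ j : ι, ∀ m ∉ M k,
        (∀ m' ∉ M k, |v m' j| ≤ |v m j|) → m ∈ M (k + 1)) :
    (∀ j : ι, ∀ m : Fin n, #{m' | |v m j| < |v m' j|} < ρ → m ∈ M ρ) ∧
    (∀ j : ι, ∀ m ∉ M ρ, |v m j| ≤ orderStatN (fun m' => |v m' j|) (n - ρ - 1)) ∧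
    (∀ c : ι → ℝ,
        {y : ι → ℝ | ∀ j, |y j - c j| ≤ ((M ρ)ᶜ).sup' hcompl fun m => |v m j|} ⊆
          {y : ι → ℝ | ∀ j, |y j - c j| ≤ orderStatN (fun m' => |v m' j|) (n - ρ - 1)}) := by
  have largest_removed : ∀ j m, #{m' | |v m j| < |v m' j|} < ρ → m ∈ M ρ :=
    fun j _ => mem_of_card_filter_lt_lt_of_maximal_mem_succ (t := fun m' => |v m' j|) hmono
      fun k hk => hstep k hk j
  have retained_le : ∀ j, ∀ m ∉ M ρ, |v m j| ≤ orderStatN (fun m' => |v m' j|) (n - ρ - 1) :=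
    fun j m hm => le_orderStatN_of_le_card_filter_lt (t := fun m' => |v m' j|)
      (le_of_not_gt fun hlt => hm (largest_removed j m hlt))
  refine ⟨largest_removed, retained_le, fun c y hy j => (hy j).trans ?_⟩
  exact sup'_le _ _ fun m hm => retained_le j m (mem_compl.1 hm)

end

/-- if the removal sets `M_k` at each stage absorb, for every coordinate
`j`, the index attaining `max_{m ∉ M_k} |v_j^{(m)}|`, then after `ρ` stages `M_ρ` contains,
for every coordinate, the indices of the `ρ` largest absolute values; hence every retained
residual is dominated by the `(ρ+1)`-th largest value (the `(n−ρ)`-th smallest, 0-indexed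
`n−ρ−1`), and the corresponding axis-aligned box is contained in the Bonferroni box. -/
theorem stmt12 (n d ρ : ℕ) (hn : 0 < n) (hd : 0 < d) (hρ : 0 < ρ)
    (v : Fin n → Fin d → ℝ)
    (hdist : ∀ j : Fin d, Function.Injective fun m => |v m j|)
    (M : ℕ → Finset (Fin n))
    (hmono : ∀ k, M k ⊆ M (k + 1))
    (hM0 : M 0 = ∅)
    (hcompl : ∀ k ≤ ρ, ((M k)ᶜ : Finset (Fin n)).Nonempty)
    (hstep : ∀ k < ρ, ∀ j : Fin d, ∀ m ∉ M k,
        (∀ m' ∉ M k, |v m' j| ≤ |v m j|) → m ∈ M (k + 1)) :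
    (∀ j : Fin d, ∀ m : Fin n,
        (Finset.univ.filter fun m' => |v m j| < |v m' j|).card < ρ → m ∈ M ρ) ∧
    (∀ j : Fin d, ∀ m ∉ M ρ, |v m j| ≤ orderStatN (fun m' => |v m' j|) (n - ρ - 1)) ∧
    (∀ c : Fin d → ℝ,
        {y : Fin d → ℝ | ∀ j, |y j - c j| ≤
            ((M ρ)ᶜ).sup' (hcompl ρ le_rfl) fun m => |v m j|} ⊆
          {y : Fin d → ℝ | ∀ j, |y j - c j| ≤ orderStatN (fun m' => |v m' j|) (n - ρ - 1)}) :=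
  stmt12_general v M (fun k _ => hmono k) (hcompl ρ le_rfl) hstep
end
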